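/- Assume (X, T, Ω, P, θ) is a random countable topological Markov chain with the b.i.p. property, condition (Ĥ) holds and ℒ_ω(1) = 1 a.s., and let {μ_ω} be the unique random probability measure with ℒ*_ω(μ_{θω}) = μ_ω a.s. Let c, t, B_ω and the random sequences (l_n(ω)), (k_n(ω)) be as in the Vasershtein contraction corollary. Then for every fibrewise Lipschitz continuous function f = {f_ω} with ∫ f dμ_ω = 0 a.s. and every g = {g_ω} with ∫ |g| dμ_ω < ∞ a.s., for all n ∈ ℕ and a.e. ω: |∫ f · (g ∘ T^{l_n(ω)}_ω) dμ_ω| ≤ 2c t^n D_ω(f) ∫ |g| dμ_{θ^{l_n(ω)}ω}, and |∫ f · (g ∘ T^{k_n(ω)}_{θ^{−k_n(ω)}ω}) dμ_{θ^{−k_n(ω)}ω}| ≤ 4 B_ω t^n D_{θ^{−k_n(ω)}ω}(f) ∫ |g| dμ_ω. -/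

import Mathlib

open MeasureTheory Real Filter

namespace RTMC

/-- The ambient sequence space `ℕ^ℕ`. -/
abbrev Seq := ℕ → ℕ

/-- The shift map. -/
def shift (x : Seq) : Seq := fun i => x (i + 1)

/-- Prepend one symbol to a sequence. -/
def cons (a : ℕ) (x : Seq) : Seq := fun i =>
  match i with
  | 0 => a
  | j + 1 => x j

/-- `x` and `y` agree in their first `k` coordinates. -/
def agrees (x y : Seq) (k : ℕ) : Prop := ∀ i < k, x i = y i

open scoped Classical in
/-- The shift metric `d_r(x,y) = r^{min{i : x_i ≠ y_i}}`. -/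
noncomputable def dr (r : ℝ) (x y : Seq) : ℝ :=
  if x = y then 0 else r ^ sInf {i | x i ≠ y i}

/-- Prepend the first `len` symbols of `w` to `x` (the inverse branch `τ_w`). -/
def prepend (w : ℕ → ℕ) (len : ℕ) (x : Seq) : Seq := fun i =>
  if i < len then w i else x (i - len)

variable {Ω : Type*}

/-- The fibre `X_ω` of a random topological Markov chain with alphabets `W` and
transition matrices `A` (`A ω i j` means `α^ω_{ij} = 1`). -/
def Xfib (θ : Ω → Ω) (W : Ω → Set ℕ) (A : Ω → ℕ → ℕ → Prop) (ω : Ω) : Set Seq :=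
  {x | (∀ i, x i ∈ W (θ^[i] ω)) ∧ ∀ i, A (θ^[i] ω) (x i) (x (i + 1))}

open scoped Classical in
/-- The Ruelle operator `ℒ_ω(f)(x) = Σ_{T_ω y = x} e^{φ_ω(y)} f(y)`, for `x ∈ X_{θω}`. -/
noncomputable def Lr (θ : Ω → Ω) (W : Ω → Set ℕ) (A : Ω → ℕ → ℕ → Prop) (φ : Ω → Seq → ℝ)
    (ω : Ω) (f : Seq → ℝ) (x : Seq) : ℝ :=
  ∑' a : ℕ, if cons a x ∈ Xfib θ W A ω then Real.exp (φ ω (cons a x)) * f (cons a x) else 0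

/-- The iterated Ruelle operator `ℒ^n_ω = ℒ_{θ^{n-1}ω} ∘ ⋯ ∘ ℒ_ω`. -/
noncomputable def Lrn (θ : Ω → Ω) (W : Ω → Set ℕ) (A : Ω → ℕ → ℕ → Prop) (φ : Ω → Seq → ℝ)
    (ω : Ω) : ℕ → (Seq → ℝ) → Seq → ℝ
  | 0 => fun f => f
  | n + 1 => fun f => Lr θ W A φ (θ^[n] ω) (Lrn θ W A φ ω n f)

/-- The dual Ruelle operator `ℒ^*_ω` on Borel measures, satisfying
`∫ f d(ℒ^*_ω μ) = ∫ ℒ_ω(f) dμ`. -/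
noncomputable def dualLr (θ : Ω → Ω) (W : Ω → Set ℕ) (A : Ω → ℕ → ℕ → Prop) (φ : Ω → Seq → ℝ)
    (ω : Ω) (μ : Measure Seq) : Measure Seq :=
  Measure.sum fun a : ℕ =>
    (μ.withDensity fun x =>
      ENNReal.ofReal ((Xfib θ W A ω).indicator (fun y => Real.exp (φ ω y)) (cons a x))).map
      (cons a)

/-- The iterated dual operator `(ℒ^n_ω)^* = ℒ^*_ω ∘ ⋯ ∘ ℒ^*_{θ^{n-1}ω}`. -/
noncomputable def dualLrn (θ : Ω → Ω) (W : Ω → Set ℕ) (A : Ω → ℕ → ℕ → Prop)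
    (φ : Ω → Seq → ℝ) : ℕ → Ω → Measure Seq → Measure Seq
  | 0, _, μ => μ
  | n + 1, ω, μ => dualLr θ W A φ ω (dualLrn θ W A φ n (θ ω) μ)

/-- The Lipschitz constant of `f` on `S` with respect to the distance function `d`. -/
noncomputable def LipC (S : Set Seq) (d : Seq → Seq → ℝ) (f : Seq → ℝ) : ℝ :=
  sInf {K : ℝ | 0 ≤ K ∧ ∀ x ∈ S, ∀ y ∈ S, |f x - f y| ≤ K * d x y}

/-- The sup norm of `f` on `S`. -/
noncomputable def supNormOn (S : Set Seq) (f : Seq → ℝ) : ℝ :=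
  sSup {t : ℝ | ∃ x ∈ S, t = |f x|}

/-- The Lipschitz norm `‖f‖_L = D(f) + ‖f‖_∞` on `S` w.r.t. the distance `d`. -/
noncomputable def LipNorm (S : Set Seq) (d : Seq → Seq → ℝ) (f : Seq → ℝ) : ℝ :=
  LipC S d f + supNormOn S f

/-- The Vasershtein distance of two Borel measures w.r.t. the cost function `d`. -/
noncomputable def Wass (d : Seq → Seq → ℝ) (μ ν : Measure Seq) : ℝ :=
  sInf {t : ℝ | ∃ m : Measure (Seq × Seq),
    m.map Prod.fst = μ ∧ m.map Prod.snd = ν ∧ t = ∫ p, d p.1 p.2 ∂m}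

/-- The Birkhoff sum `S_n φ_ω = Σ_{i=0}^{n-1} φ_{θ^i ω} ∘ T^i_ω`. -/
noncomputable def birkhoffR (θ : Ω → Ω) (φ : Ω → Seq → ℝ) (ω : Ω) (n : ℕ) (x : Seq) : ℝ :=
  ∑ i ∈ Finset.range n, φ (θ^[i] ω) (shift^[i] x)

/-- `w` is an `ω`-admissible word of length `len`. -/
def AdmR (θ : Ω → Ω) (W : Ω → Set ℕ) (A : Ω → ℕ → ℕ → Prop) (ω : Ω) (w : ℕ → ℕ)
    (len : ℕ) : Prop :=
  (∀ i < len, w i ∈ W (θ^[i] ω)) ∧ ∀ i, i + 1 < len → A (θ^[i] ω) (w i) (w (i + 1))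

/-- `B_ω = exp Σ_{k=1}^∞ κ(θ^{−k} ω) r^k`. -/
noncomputable def Brand (θinv : Ω → Ω) (κ : Ω → ℝ) (r : ℝ) (ω : Ω) : ℝ :=
  Real.exp (∑' k : ℕ, κ (θinv^[k + 1] ω) * r ^ (k + 1))

/-- `α_ω := B_ω/β`. -/
noncomputable def alphaR (θinv : Ω → Ω) (κ : Ω → ℝ) (r β : ℝ) (ω : Ω) : ℝ :=
  Brand θinv κ r ω / β

/-- The metric `d̄_ω(x,y) := min{1, α_ω d_r(x,y)}`. -/
noncomputable def dbarR (θinv : Ω → Ω) (κ : Ω → ℝ) (r β : ℝ) (ω : Ω) (x y : Seq) : ℝ :=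
  min 1 (alphaR θinv κ r β ω * dr r x y)

/-- `t_ω := max{β, 1 − (1 − r^{n_ω} α_ω) C_{θ^{n_ω}ω}/B_{θ^{n_ω}ω}}`. -/
noncomputable def tR (θ θinv : Ω → Ω) (κ : Ω → ℝ) (r β : ℝ) (nseq : Ω → ℕ) (C : Ω → ℝ)
    (ω : Ω) : ℝ :=
  max β (1 - (1 - r ^ nseq ω * alphaR θinv κ r β ω) * C (θ^[nseq ω] ω) /
    Brand θinv κ r (θ^[nseq ω] ω))

/-- `Λ_k(ω) = Π_{i=0}^{k-1} λ_{θ^i ω}`. -/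
noncomputable def LamProd (θ : Ω → Ω) (lam : Ω → ℝ) (ω : Ω) (k : ℕ) : ℝ :=
  ∏ i ∈ Finset.range k, lam (θ^[i] ω)

variable [MeasurableSpace Ω]

/-- The big images and big preimages (b.i.p.) property of a random topological
Markov chain, together with fibrewise topological mixing. -/
structure BIPData (θ θinv : Ω → Ω) (W : Ω → Set ℕ) (A : Ω → ℕ → ℕ → Prop)
    (P : Measure Ω) where
  /-- the big images set `Ω_bi` -/
  Ωbi : Set Ω
  /-- the big preimages set `Ω_bp` -/
  Ωbp : Set Ω
  /-- the finite set `ℐ ⊆ ℕ` -/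
  I : Finset ℕ
  measΩbi : MeasurableSet Ωbi
  measΩbp : MeasurableSet Ωbp
  posΩbi : 0 < P Ωbi
  posΩbp : 0 < P Ωbp
  /-- big images: for `ω ∈ Ω_bi` and `a ∈ 𝒲¹_{θ^{-1}ω}` there is `b ∈ ℐ` with
  `ab ∈ 𝒲²_{θ^{-1}ω}` -/
  bigImages : ∀ᵐ ω ∂P, ω ∈ Ωbi → ∀ a ∈ W (θinv ω),
    ∃ b ∈ I, (b : ℕ) ∈ W ω ∧ A (θinv ω) a b
  /-- big preimages: for `ω ∈ Ω_bp` and `a ∈ 𝒲¹_ω` there is `b ∈ ℐ` with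
  `ba ∈ 𝒲²_{θ^{-1}ω}` -/
  bigPreimages : ∀ᵐ ω ∂P, ω ∈ Ωbp → ∀ a ∈ W ω,
    ∃ b ∈ I, (b : ℕ) ∈ W (θinv ω) ∧ A (θinv ω) b a
  /-- fibrewise topological mixing, with random mixing times `N_{ab}` -/
  mixing : ∀ a b : ℕ, ∃ N : Ω → ℕ, Measurable N ∧ ∀ᵐ ω ∂P, ∀ n, N ω ≤ n →
    a ∈ W ω → b ∈ W (θ^[n] ω) → ∃ x ∈ Xfib θ W A ω, x 0 = a ∧ x n = b

/-- The potential `φ` is fibrewise locally Hölder continuous with index 2,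
parameter `r` and Hölder constants `κ(ω)`: `V^ω_n(φ) ≤ κ(ω) r^n` for `n ≥ 2`. -/
def LocHolder2 (θ : Ω → Ω) (W : Ω → Set ℕ) (A : Ω → ℕ → ℕ → Prop) (P : Measure Ω)
    (φ : Ω → Seq → ℝ) (r : ℝ) (κ : Ω → ℝ) : Prop :=
  ∀ᵐ ω ∂P, ∀ n, 2 ≤ n → ∀ x ∈ Xfib θ W A ω, ∀ y ∈ Xfib θ W A ω, agrees x y n →
    |φ ω x - φ ω y| ≤ κ ω * r ^ n

/-- `V^ω_1(φ) < ∞` for a.e. `ω` with `θω ∈ S`. -/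
def Var1Fin (θ : Ω → Ω) (W : Ω → Set ℕ) (A : Ω → ℕ → ℕ → Prop) (P : Measure Ω)
    (φ : Ω → Seq → ℝ) (S : Set Ω) : Prop :=
  ∀ᵐ ω ∂P, θ ω ∈ S → ∃ M : ℝ, ∀ x ∈ Xfib θ W A ω, ∀ y ∈ Xfib θ W A ω, agrees x y 1 →
    |φ ω x - φ ω y| ≤ M

/-- A random probability measure `{μ_ω}`. -/
def IsRandomProbMeasure (θ : Ω → Ω) (W : Ω → Set ℕ) (A : Ω → ℕ → ℕ → Prop)
    (P : Measure Ω) (μ : Ω → Measure Seq) : Prop :=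
  (∀ B : Set Seq, MeasurableSet B → Measurable fun ω => μ ω B) ∧
    ∀ᵐ ω ∂P, IsProbabilityMeasure (μ ω) ∧ μ ω (Xfib θ W A ω) = 1

/-- `f = {f_ω}` is fibrewise Lipschitz continuous (w.r.t. `d_r`) and bounded. -/
def FibLip (θ : Ω → Ω) (W : Ω → Set ℕ) (A : Ω → ℕ → ℕ → Prop) (P : Measure Ω) (r : ℝ)
    (f : Ω → Seq → ℝ) : Prop :=
  ∀ᵐ ω ∂P, (∃ K, 0 ≤ K ∧ ∀ x ∈ Xfib θ W A ω, ∀ y ∈ Xfib θ W A ω,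
      |f ω x - f ω y| ≤ K * dr r x y) ∧ ∃ M, ∀ x ∈ Xfib θ W A ω, |f ω x| ≤ M

/-- `f = {f_ω}` is fibrewise Hölder continuous with parameter `r`. -/
def FibHolder (θ : Ω → Ω) (W : Ω → Set ℕ) (A : Ω → ℕ → ℕ → Prop) (P : Measure Ω) (r : ℝ)
    (f : Ω → Seq → ℝ) : Prop :=
  ∀ᵐ ω ∂P, ∃ κf M : ℝ, (∀ k, 1 ≤ k → ∀ x ∈ Xfib θ W A ω, ∀ y ∈ Xfib θ W A ω,
      agrees x y k → |f ω x - f ω y| ≤ κf * r ^ k) ∧ ∀ x ∈ Xfib θ W A ω, |f ω x| ≤ M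


section helpers

theorem measurable_cons (a : ℕ) : Measurable (cons a) := by
  refine measurable_pi_lambda _ fun i => ?_
  cases i with
  | zero => exact measurable_const
  | succ j => exact measurable_pi_apply j

theorem measurableSet_Xfib {Ω : Type*} (θ : Ω → Ω) (W : Ω → Set ℕ) (A : Ω → ℕ → ℕ → Prop)
    (ω : Ω) : MeasurableSet (Xfib θ W A ω) := by
  have h : Xfib θ W A ω = (⋂ i, {x : Seq | x i ∈ W (θ^[i] ω)}) ∩
      ⋂ i, {x : Seq | (x i, x (i + 1)) ∈ {p : ℕ × ℕ | A (θ^[i] ω) p.1 p.2}} := by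
    ext x; simp [Xfib]
  rw [h]
  refine MeasurableSet.inter (MeasurableSet.iInter fun i => ?_) (MeasurableSet.iInter fun i => ?_)
  · exact measurable_pi_apply i (MeasurableSet.of_discrete)
  · exact ((measurable_pi_apply i).prodMk (measurable_pi_apply (i + 1)))
      (MeasurableSet.of_discrete)

theorem measurable_dens (S : Set Seq) (hS : MeasurableSet S) (φ : Seq → ℝ) (r K : ℝ)
    (hr : 0 < r ∧ r < 1)
    (h : ∀ n, 2 ≤ n → ∀ x ∈ S, ∀ y ∈ S, agrees x y n → |φ x - φ y| ≤ K * r ^ n) :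
    Measurable (S.indicator (fun y => Real.exp (φ y))) := by
  classical
  have hc : ContinuousOn φ S := by
    intro x hx
    rw [ContinuousWithinAt, Metric.tendsto_nhds]
    intro ε hε
    have ht : Tendsto (fun n : ℕ => K * r ^ n) atTop (nhds 0) := by
      simpa using (tendsto_pow_atTop_nhds_zero_of_lt_one hr.1.le hr.2).const_mul K
    obtain ⟨n, hn2, hn⟩ := ((eventually_ge_atTop 2).and (ht.eventually (gt_mem_nhds hε))).exists
    have hnb : {y : Seq | agrees x y n} ∈ nhds x := by
      have : {y : Seq | agrees x y n} = ⋂ i ∈ Set.Iio n, {y : Seq | y i = x i} := by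
        ext y; simp [agrees, eq_comm]
      rw [this, Filter.biInter_mem (Set.finite_Iio n)]
      intro i _
      exact (continuous_apply i).continuousAt (mem_nhds_discrete.2 (show x i ∈ {z | z = x i} from rfl))
    filter_upwards [mem_nhdsWithin_of_mem_nhds hnb, self_mem_nhdsWithin] with y hy hyS
    rw [Real.dist_eq, abs_sub_comm]
    exact (h n hn2 x hx y hyS hy).trans_lt hn
  rw [← Set.piecewise_eq_indicator]
  exact (Real.continuous_exp.comp_continuousOn hc).measurable_piecewise continuousOn_const hS

variable {Ω : Type*} (θ : Ω → Ω) (W : Ω → Set ℕ) (A : Ω → ℕ → ℕ → Prop) (φ : Ω → Seq → ℝ)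

theorem integrable_tsum_aux {α : Type*} [MeasurableSpace α] {m : Measure α} {F : ℕ → α → ℝ}
    (hF : ∀ i, AEStronglyMeasurable (F i) m)
    (hs : ∑' i, ∫⁻ a, ‖F i a‖ₑ ∂m ≠ ⊤) : Integrable (fun x => ∑' i, F i x) m := by
  have hle : ∫⁻ x, ∑' i, ‖F i x‖ₑ ∂m ≠ ⊤ := by
    rwa [lintegral_tsum fun i => (hF i).enorm]
  have hfin := ae_lt_top' (AEMeasurable.tsum fun i => (hF i).enorm) hle
  refine ⟨?_, ?_⟩
  · refine aestronglyMeasurable_of_tendsto_ae atTop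
      (f := fun n : ℕ => fun x => ∑ i ∈ Finset.range n, F i x) (fun n => ?_) ?_
    · exact Finset.aestronglyMeasurable_fun_sum _ fun i _ => hF i
    · filter_upwards [hfin] with x hx
      exact (Summable.of_enorm hx.ne).hasSum.tendsto_sum_nat
  · exact (lintegral_mono fun x => enorm_tsum_le_tsum_enorm).trans_lt hle.lt_top

theorem step (ω : Ω) (ν : Measure Seq)
    (hm : Measurable ((Xfib θ W A ω).indicator (fun y => Real.exp (φ ω y))))
    (h : Seq → ℝ) (hh : Integrable h (dualLr θ W A φ ω ν)) :
    Integrable (Lr θ W A φ ω h) ν ∧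
      ∫ x, h x ∂(dualLr θ W A φ ω ν) = ∫ x, Lr θ W A φ ω h x ∂ν := by
  classical
  set D : Seq → ℝ := (Xfib θ W A ω).indicator (fun y => Real.exp (φ ω y)) with hD
  have hD0 : ∀ x, 0 ≤ D x := fun x => Set.indicator_nonneg (fun _ _ => (Real.exp_pos _).le) x
  have hL : Lr θ W A φ ω h = fun x => ∑' a, D (cons a x) * h (cons a x) := by
    funext x
    unfold Lr
    refine tsum_congr fun a => ?_
    by_cases hx : cons a x ∈ Xfib θ W A ω <;> simp [hD, hx]
  have hdm : ∀ a, Measurable fun x => ENNReal.ofReal (D (cons a x)) := fun a =>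
    (hm.comp (measurable_cons a)).ennreal_ofReal
  have hsm : ∀ (a : ℕ) (x : Seq), (ENNReal.ofReal (D (cons a x))).toReal • h (cons a x)
      = D (cons a x) * h (cons a x) := fun a x => by
    rw [ENNReal.toReal_ofReal (hD0 _), smul_eq_mul]
  unfold dualLr at hh ⊢
  obtain ⟨h1, h2⟩ := integrable_sum_measure_iff.1 hh
  have hint : ∀ a, Integrable (fun x => D (cons a x) * h (cons a x)) ν := fun a => by
    have h3 := (integrable_map_measure (h1 a).1 (measurable_cons a).aemeasurable).1 (h1 a)
    have h4 := (integrable_withDensity_iff_integrable_smul' (hdm a)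
      (ae_of_all _ fun _ => ENNReal.ofReal_lt_top)).1 h3
    simpa only [Function.comp, hsm] using h4
  have heq : ∀ k : ℝ → ℝ, Continuous k → ∀ a, ∫ x, k (h x) ∂((ν.withDensity fun x =>
      ENNReal.ofReal (D (cons a x))).map (cons a)) = ∫ x, D (cons a x) * k (h (cons a x)) ∂ν := by
    intro k hk a
    rw [integral_map (measurable_cons a).aemeasurable
      (hk.comp_aestronglyMeasurable (h1 a).1),
      integral_withDensity_eq_integral_toReal_smul (hdm a)
      (ae_of_all _ fun _ => ENNReal.ofReal_lt_top)]
    refine integral_congr_ae (ae_of_all _ fun x => ?_)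
    simp only [ENNReal.toReal_ofReal (hD0 _), smul_eq_mul]
  have hfin : ∑' a, ∫⁻ x, ‖D (cons a x) * h (cons a x)‖ₑ ∂ν ≠ ⊤ := by
    have h5 : Summable fun a => ∫ x, ‖D (cons a x) * h (cons a x)‖ ∂ν := by
      refine h2.congr fun a => ?_
      rw [heq (fun z => ‖z‖) continuous_norm a]
      refine integral_congr_ae (ae_of_all _ fun x => ?_)
      simp only [norm_mul, Real.norm_of_nonneg (hD0 _)]
    have h6 := h5.tsum_ofReal_ne_top
    convert h6 using 3 with a
    rw [ofReal_integral_norm_eq_lintegral_enorm (hint a)]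
  rw [hL]
  refine ⟨integrable_tsum_aux (fun a => (hint a).1) hfin, ?_⟩
  rw [integral_tsum (fun a => (hint a).1) hfin, integral_sum_measure hh]
  exact tsum_congr fun a => heq id continuous_id a

theorem Lrn_mul (ω : Ω) (n : ℕ) (f g : Seq → ℝ) :
    Lrn θ W A φ ω n (fun x => f x * g (shift^[n] x)) = fun x => Lrn θ W A φ ω n f x * g x := by
  induction n generalizing g with
  | zero => rfl
  | succ n ih =>
    have h1 := ih (fun y => g (shift y))
    have h2 : (fun x => f x * g (shift^[n + 1] x)) = fun x => f x * g (shift (shift^[n] x)) := by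
      funext x; rw [Function.iterate_succ_apply']
    simp only [Lrn]
    rw [h2, h1]
    funext x
    unfold Lr
    rw [← tsum_mul_right]
    refine tsum_congr fun a => ?_
    have h3 : shift (cons a x) = x := rfl
    beta_reduce
    rw [h3]
    split_ifs
    · ring
    · ring

theorem transfer (μ : Ω → Measure Seq) (ω : Ω)
    (hm : ∀ i, Measurable
      ((Xfib θ W A (θ^[i] ω)).indicator (fun y => Real.exp (φ (θ^[i] ω) y))))
    (hi : ∀ i, dualLr θ W A φ (θ^[i] ω) (μ (θ (θ^[i] ω))) = μ (θ^[i] ω))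
    (h : Seq → ℝ) (hh : Integrable h (μ ω)) (n : ℕ) :
    Integrable (Lrn θ W A φ ω n h) (μ (θ^[n] ω)) ∧
      ∫ x, h x ∂(μ ω) = ∫ x, Lrn θ W A φ ω n h x ∂(μ (θ^[n] ω)) := by
  induction n with
  | zero => exact ⟨hh, rfl⟩
  | succ n ih =>
    obtain ⟨h1, h2⟩ := ih
    rw [← hi n] at h1
    have h3 := step θ W A φ _ _ (hm n) _ h1
    rw [hi n] at h3
    rw [Function.iterate_succ_apply']
    exact ⟨h3.1, h2.trans h3.2⟩

theorem core (μ : Ω → Measure Seq) (ω : Ω)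
    (hm : ∀ i, Measurable
      ((Xfib θ W A (θ^[i] ω)).indicator (fun y => Real.exp (φ (θ^[i] ω) y))))
    (hi : ∀ i, dualLr θ W A φ (θ^[i] ω) (μ (θ (θ^[i] ω))) = μ (θ^[i] ω))
    (n : ℕ) (ω' : Ω) (hω' : θ^[n] ω = ω')
    (hp : IsProbabilityMeasure (μ ω') ∧ μ ω' (Xfib θ W A ω') = 1)
    (f g : Seq → ℝ) (hg : Integrable g (μ ω')) (C : ℝ) (hC : 0 ≤ C)
    (hb : ∀ x ∈ Xfib θ W A ω', |Lrn θ W A φ ω n f x| ≤ C) :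
    |∫ x, f x * g (shift^[n] x) ∂(μ ω)| ≤ C * ∫ x, |g x| ∂(μ ω') := by
  by_cases hh : Integrable (fun x => f x * g (shift^[n] x)) (μ ω)
  · have := hp.1
    have h1 := (transfer θ W A φ μ ω hm hi _ hh n).2
    rw [h1, Lrn_mul, hω', ← integral_const_mul, ← Real.norm_eq_abs]
    refine norm_integral_le_of_norm_le (hg.abs.const_mul C) ?_
    have hae : ∀ᵐ x ∂(μ ω'), x ∈ Xfib θ W A ω' :=
      (prob_compl_eq_zero_iff (measurableSet_Xfib θ W A ω')).2 hp.2
    filter_upwards [hae] with x hx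
    rw [Real.norm_eq_abs, abs_mul]
    exact mul_le_mul_of_nonneg_right (hb x hx) (abs_nonneg _)
  · rw [integral_undef hh, abs_zero]
    exact mul_nonneg hC (integral_nonneg fun _ => abs_nonneg _)

theorem LipC_nonneg (S : Set Seq) (d : Seq → Seq → ℝ) (f : Seq → ℝ) : 0 ≤ LipC S d f :=
  Real.sInf_nonneg fun _ h => h.1

end helpers

/-- (Exponential decay of correlations.) Assume the b.i.p. property,
condition (Ĥ) and `ℒ_ω(1) = 1` a.s.; let `{μ_ω}` be the invariant random probability
measure and let `c`, `t`, `B_ω`, `(k_n(ω))`, `(l_n(ω))` be as in the Vasershtein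
contraction corollary. Then for every fibrewise Lipschitz `f` with `∫ f dμ_ω = 0` a.s. and
every `g` with `∫|g| dμ_ω < ∞` a.s., the correlations `∫ f · (g∘T^{l_n(ω)}_ω) dμ_ω` and
`∫ f · (g∘T^{k_n(ω)}_{θ^{-k_n(ω)}ω}) dμ_{θ^{-k_n(ω)}ω}` decay like `2c t^n D(f) ∫|g|` and
`4B_ω t^n D(f) ∫|g|`, respectively. -/
theorem random_decay_of_correlations
    {Ω : Type*} [MeasurableSpace Ω] (P : Measure Ω) [IsProbabilityMeasure P]
    (θ θinv : Ω → Ω) (hθ : Ergodic θ P) (hθinv : Measurable θinv)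
    (hinv : ∀ ω, θinv (θ ω) = ω ∧ θ (θinv ω) = ω)
    (W : Ω → Set ℕ) (A : Ω → ℕ → ℕ → Prop)
    (hrow : ∀ ω, ∀ i ∈ W ω, ∃ j ∈ W (θ ω), A ω i j)
    (hcol : ∀ ω, ∀ i ∈ W (θ ω), ∃ j ∈ W ω, A ω j i)
    (φ : Ω → Seq → ℝ) (r : ℝ) (hr : 0 < r ∧ r < 1)
    (bip : BIPData θ θinv W A P)
    -- condition (Ĥ)
    (κ : Ω → ℝ) (hκm : Measurable κ) (hκ0 : ∀ᵐ ω ∂P, 0 ≤ κ ω)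
    (hκint : Integrable (fun ω => Real.log (κ ω)) P)
    (hφH : LocHolder2 θ W A P φ r κ)
    (hφ1 : Var1Fin θ W A P φ (bip.Ωbi ∪ bip.Ωbp))
    -- normalisation `ℒ_ω(1) = 1`
    (hnorm : ∀ᵐ ω ∂P, ∀ x ∈ Xfib θ W A (θ ω), Lr θ W A φ ω (fun _ => 1) x = 1)
    -- the invariant random probability measure `{μ_ω}`
    (μ : Ω → Measure Seq) (hμ : IsRandomProbMeasure θ W A P μ)
    (hμinv : ∀ᵐ ω ∂P, dualLr θ W A φ ω (μ (θ ω)) = μ ω)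
    -- the constants and random sequences of the Vasershtein contraction corollary
    (t c : ℝ) (ht : t ∈ Set.Ioo (0 : ℝ) 1) (hc : 0 < c) (kseq lseq : Ω → ℕ → ℕ)
    (hdec1 : ∀ f : Ω → Seq → ℝ, FibLip θ W A P r f → ∀ n : ℕ, 1 ≤ n → ∀ᵐ ω ∂P,
      ∀ x ∈ Xfib θ W A (θ^[lseq ω n] ω),
        |Lrn θ W A φ ω (lseq ω n) (f ω) x - ∫ y, f ω y ∂(μ ω)| ≤
          2 * c * t ^ n * LipC (Xfib θ W A ω) (dr r) (f ω))
    (hdec2 : ∀ f : Ω → Seq → ℝ, FibLip θ W A P r f → ∀ n : ℕ, 1 ≤ n → ∀ᵐ ω ∂P,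
      ∀ x ∈ Xfib θ W A ω,
        |Lrn θ W A φ (θinv^[kseq ω n] ω) (kseq ω n) (f (θinv^[kseq ω n] ω)) x -
            ∫ y, f (θinv^[kseq ω n] ω) y ∂(μ (θinv^[kseq ω n] ω))| ≤
          4 * Brand θinv κ r ω * t ^ n *
            LipC (Xfib θ W A (θinv^[kseq ω n] ω)) (dr r) (f (θinv^[kseq ω n] ω))) :
    ∀ f : Ω → Seq → ℝ, FibLip θ W A P r f →
      (∀ᵐ ω ∂P, (∫ x, f ω x ∂(μ ω)) = 0) →
      ∀ g : Ω → Seq → ℝ, (∀ᵐ ω ∂P, Integrable (g ω) (μ ω)) →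
      ∀ n : ℕ, 1 ≤ n → ∀ᵐ ω ∂P,
        |∫ x, f ω x * g (θ^[lseq ω n] ω) (shift^[lseq ω n] x) ∂(μ ω)| ≤
          2 * c * t ^ n * LipC (Xfib θ W A ω) (dr r) (f ω) *
            ∫ x, |g (θ^[lseq ω n] ω) x| ∂(μ (θ^[lseq ω n] ω)) ∧
        |∫ x, f (θinv^[kseq ω n] ω) x * g ω (shift^[kseq ω n] x)
            ∂(μ (θinv^[kseq ω n] ω))| ≤
          4 * Brand θinv κ r ω * t ^ n *
            LipC (Xfib θ W A (θinv^[kseq ω n] ω)) (dr r) (f (θinv^[kseq ω n] ω)) *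
            ∫ x, |g ω x| ∂(μ ω) := by
  intro f hf hf0 g hg n hn
  have hθq : Measure.QuasiMeasurePreserving θ P P :=
    hθ.toMeasurePreserving.quasiMeasurePreserving
  have hθiq : Measure.QuasiMeasurePreserving θinv P P := by
    let e : Ω ≃ᵐ Ω :=
      { toFun := θ, invFun := θinv, left_inv := fun ω => (hinv ω).1,
        right_inv := fun ω => (hinv ω).2,
        measurable_toFun := hθ.toMeasurePreserving.measurable,
        measurable_invFun := hθinv }
    have he : MeasurePreserving e P P := hθ.toMeasurePreserving
    exact (he.symm e).quasiMeasurePreserving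
  have key : ∀ p : Ω → Prop, (∀ᵐ ω ∂P, p ω) → ∀ᵐ ω ∂P, ∀ k i, p (θ^[i] (θinv^[k] ω)) := by
    intro p hp
    rw [ae_all_iff]; intro k
    rw [ae_all_iff]; intro i
    exact (hθiq.iterate k).ae ((hθq.iterate i).ae hp)
  have hmeas : ∀ᵐ ω ∂P, Measurable
      ((Xfib θ W A ω).indicator (fun y => Real.exp (φ ω y))) := by
    filter_upwards [hφH] with ω h
    exact measurable_dens _ (measurableSet_Xfib θ W A ω) _ r (κ ω) hr h
  filter_upwards [key _ hmeas, key _ hμinv, key _ hg, key _ hμ.2, key _ hf0,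
    hdec1 f hf n hn, hdec2 f hf n hn] with ω h1 h2 h3 h4 h5 h6 h7
  have htn : 0 ≤ t ^ n := pow_nonneg ht.1.le n
  constructor
  · have h50 := h5 0 0
    simp only [Function.iterate_zero, id] at h50
    rw [h50] at h6
    simp only [sub_zero] at h6
    refine core θ W A φ μ ω (h1 0) (h2 0) _ _ rfl (h4 0 _) _ _ (h3 0 _) _ ?_ h6
    exact mul_nonneg (by positivity) (LipC_nonneg _ _ _)
  · have h50 := h5 (kseq ω n) 0
    simp only [Function.iterate_zero, id] at h50
    rw [h50] at h7
    simp only [sub_zero] at h7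
    refine core θ W A φ μ _ (h1 (kseq ω n)) (h2 (kseq ω n)) _ ω ?_ (h4 0 0) _ _ (h3 0 0) _ ?_ h7
    · exact (Function.RightInverse.iterate (fun ω => (hinv ω).2) _) ω
    · have : 0 ≤ Brand θinv κ r ω := (Real.exp_pos _).le
      exact mul_nonneg (by positivity) (LipC_nonneg _ _ _)

end RTMC
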